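/- For all z ∈ ℂ, all generic tuples ū (length n), v̄ (length m), and any complex w such that the augmented tuples remain generic: K^{(z)}_{n+1,m+1}((ū, w−c) | (v̄, w)) = −z·K^{(z)}_{n,m}(ū | v̄), and \bar{K}^{(z)}_{n+1,m+1}((ū, w+c) | (v̄, w)) = −z·\bar{K}^{(z)}_{n,m}(ū | v̄). -/

import Mathlib

open scoped BigOperators

noncomputable section

/-- The rational function `g(u,v) = c/(u-v)`. -/
def gC (c u v : ℂ) : ℂ := c / (u - v)

/-- The rational function `f(u,v) = (u-v+c)/(u-v)`. -/
def fC (c u v : ℂ) : ℂ := (u - v + c) / (u - v)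

/-- The rational function `h(u,v) = (u-v+c)/c`. -/
def hC (c u v : ℂ) : ℂ := (u - v + c) / c

/-- A family of parameters is generic if all pairwise differences avoid `0, ±c, ±2c`. -/
def Generic (c : ℂ) {ι : Type*} (w : ι → ℂ) : Prop :=
  ∀ i j, i ≠ j → w i - w j ≠ 0 ∧ w i - w j ≠ c ∧ w i - w j ≠ -c ∧
    w i - w j ≠ 2 * c ∧ w i - w j ≠ -2 * c

/-- The modified Izergin determinant `K^{(z)}(x̄|ȳ)`. -/
def KIz (c z : ℂ) {ι κ : Type*} [Fintype ι] [Fintype κ] [DecidableEq κ]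
    (x : ι → ℂ) (y : κ → ℂ) : ℂ :=
  Matrix.det (Matrix.of fun j k : κ =>
    -z * (if j = k then 1 else 0) +
      (∏ i, fC c (x i) (y j)) * (∏ i ∈ Finset.univ.erase j, fC c (y j) (y i))
        / hC c (y j) (y k))

/-- The conjugated modified Izergin determinant: `c` is replaced by `-c`. -/
def KIzBar (c z : ℂ) {ι κ : Type*} [Fintype ι] [Fintype κ] [DecidableEq κ]
    (x : ι → ℂ) (y : κ → ℂ) : ℂ :=
  KIz (-c) z x y

/-- Restriction of a tuple to a subtuple indexed by a `Finset`. -/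
def restr {p : ℕ} (w : Fin p → ℂ) (s : Finset (Fin p)) : {x // x ∈ s} → ℂ :=
  fun i => w i.1

/-- Double product `f(w̄_s, w̄_t)` over two subtuples of a tuple. -/
def fSS (c : ℂ) {p : ℕ} (w : Fin p → ℂ) (s t : Finset (Fin p)) : ℂ :=
  ∏ i ∈ s, ∏ j ∈ t, fC c (w i) (w j)

/-!
The determinant `K^{(z)}` is `det (M - z)`, where row `j` of the matrix `M` carries the weight
`f(x̄, y_j) f(y_j, ȳ_j)`. Augment `x̄` by `w - c` and `ȳ` by `w`. The weight of the new row contains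
the factor `f(w - c, w) = 0`, so this row of `M - z` is `(0, …, 0, -z)`. The weights of the old rows
are multiplied by `f(w - c, y_j) f(y_j, w) = 1`, so the remaining minor is the original `M - z`.
The argument is unchanged if a whole tuple `w̄` is adjoined instead of a single parameter.
-/

section Kernel

variable {c u v : ℂ}

theorem fC_eq_zero_iff (huv : u ≠ v) : fC c u v = 0 ↔ u = v - c := by
  rw [fC, div_eq_zero_iff, or_iff_left (sub_ne_zero.2 huv), ← add_sub_right_comm, sub_eq_zero,
    eq_sub_iff_add_eq]

theorem fC_sub_mul_fC (hvu : v ≠ u) (hvuc : v ≠ u - c) : fC c (u - c) v * fC c v u = 1 := by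
  have hden : v - u ≠ 0 := sub_ne_zero.2 hvu
  have hden' : u - c - v ≠ 0 := sub_ne_zero.2 hvuc.symm
  rw [fC, fC, div_mul_div_comm, div_eq_one_iff_eq (mul_ne_zero hden' hden)]
  ring

end Kernel

theorem Generic.comp_injective {c : ℂ} {ι ι' : Type*} {w : ι → ℂ} (hw : Generic c w) {e : ι' → ι}
    (he : Function.Injective e) : Generic c (w ∘ e) :=
  fun i j hij => hw (e i) (e j) (he.ne hij)

theorem Generic.sumElim_of_append_append {c : ℂ} {n m p : ℕ} {u : Fin n → ℂ} {v : Fin m → ℂ}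
    {w : Fin p → ℂ} (h : Generic c (Fin.append u (Fin.append v w))) :
    Generic c (Sum.elim u (Sum.elim v w)) := by
  have hinj : Function.Injective
      (finSumFinEquiv ∘ Sum.map id finSumFinEquiv : Fin n ⊕ Fin m ⊕ Fin p → Fin (n + (m + p))) :=
    finSumFinEquiv.injective.comp (Function.injective_id.sumMap finSumFinEquiv.injective)
  convert h.comp_injective hinj using 1
  ext (i | i | i) <;> simp

theorem det_fromBlocks_zero_zero_sub_scalar {R κ l : Type*} [CommRing R] [Fintype κ] [Fintype l]
    [DecidableEq κ] [DecidableEq l] (A : Matrix κ κ R) (B : Matrix κ l R) (z : R) :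
    (Matrix.fromBlocks A B 0 0 - Matrix.scalar (κ ⊕ l) z).det =
      (-z) ^ Fintype.card l * (A - Matrix.scalar κ z).det := by
  have hblocks : Matrix.fromBlocks A B 0 0 - Matrix.scalar (κ ⊕ l) z =
      Matrix.fromBlocks (A - Matrix.scalar κ z) B 0 (Matrix.scalar l (-z)) := by
    ext (j | j) (k | k) <;> simp [Matrix.diagonal_apply, neg_ite]
  rw [hblocks, Matrix.det_fromBlocks_zero₂₁, mul_comm]
  simp

section Izergin

variable {ι κ l : Type*} [Fintype ι] [Fintype κ] [Fintype l] [DecidableEq κ] [DecidableEq l]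

/-- The weight `f(x̄, y_j) f(y_j, ȳ_j)` of row `j` in the modified Izergin determinant. -/
def izerginWeight (c : ℂ) (x : ι → ℂ) (y : κ → ℂ) (j : κ) : ℂ :=
  (∏ i, fC c (x i) (y j)) * ∏ i ∈ Finset.univ.erase j, fC c (y j) (y i)

/-- The matrix whose determinant after subtracting the scalar `z` is the modified Izergin
determinant `K^{(z)}(x̄|ȳ)`. -/
def izerginMatrix (c : ℂ) (x : ι → ℂ) (y : κ → ℂ) : Matrix κ κ ℂ :=
  Matrix.of fun j k => izerginWeight c x y j / hC c (y j) (y k)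

theorem KIz_eq_det_sub_scalar (c z : ℂ) (x : ι → ℂ) (y : κ → ℂ) :
    KIz c z x y = (izerginMatrix c x y - Matrix.scalar κ z).det := by
  unfold KIz
  congr 1
  ext j k
  by_cases hjk : j = k <;> simp [izerginMatrix, izerginWeight, hjk, sub_eq_neg_add]

theorem KIz_comp_equiv {ι' κ' : Type*} [Fintype ι'] [Fintype κ'] [DecidableEq κ'] (c z : ℂ)
    (x : ι → ℂ) (y : κ → ℂ) (e : ι' ≃ ι) (e' : κ' ≃ κ) :
    KIz c z (x ∘ e) (y ∘ e') = KIz c z x y := by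
  have hweight (j : κ') : izerginWeight c (x ∘ e) (y ∘ e') j = izerginWeight c x y (e' j) := by
    refine congrArg₂ (· * ·) (e.prod_comp fun i => fC c (x i) (y (e' j))) ?_
    exact Finset.prod_equiv e' (by simp) (by simp)
  rw [KIz_eq_det_sub_scalar, KIz_eq_det_sub_scalar, ← Matrix.det_submatrix_equiv_self e']
  congr 1
  ext j k
  simp [izerginMatrix, hweight, Matrix.diagonal_apply]

theorem KIz_append (c z : ℂ) {n n' m m' : ℕ} (u : Fin n → ℂ) (u' : Fin n' → ℂ) (v : Fin m → ℂ)
    (v' : Fin m' → ℂ) :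
    KIz c z (Fin.append u u') (Fin.append v v') = KIz c z (Sum.elim u u') (Sum.elim v v') := by
  rw [← Fin.append_comp_sumElim (xs := u), ← Fin.append_comp_sumElim (xs := v)]
  exact (KIz_comp_equiv c z _ _ finSumFinEquiv finSumFinEquiv).symm

variable {c : ℂ} {x : ι → ℂ} {y : κ → ℂ} {w : l → ℂ}

theorem izerginWeight_sumElim_inl (j : κ) (hyw : ∀ i, y j ≠ w i) (hywc : ∀ i, y j ≠ w i - c) :
    izerginWeight c (Sum.elim x fun i => w i - c) (Sum.elim y w) (.inl j) =
      izerginWeight c x y j := by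
  have herase : (Finset.univ : Finset (κ ⊕ l)).erase (.inl j) =
      (Finset.univ.erase j).disjSum Finset.univ := by
    ext (i | i) <;> simp
  have hcancel : (∏ i, fC c (w i - c) (y j)) * ∏ i, fC c (y j) (w i) = 1 := by
    rw [← Finset.prod_mul_distrib]
    exact Finset.prod_eq_one fun i _ => fC_sub_mul_fC (hyw i) (hywc i)
  simp only [izerginWeight, herase, Fintype.prod_sum_type, Finset.prod_disjSum, Sum.elim_inl,
    Sum.elim_inr]
  rw [mul_mul_mul_comm, hcancel, mul_one]

theorem izerginWeight_eq_zero {j : κ} {i : ι} (hc : c ≠ 0) (hij : x i = y j - c) :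
    izerginWeight c x y j = 0 := by
  have hne : x i ≠ y j := by simpa [hij] using hc
  rw [izerginWeight, Finset.prod_eq_zero (Finset.mem_univ i) ((fC_eq_zero_iff hne).2 hij), zero_mul]

theorem exists_izerginMatrix_sumElim_eq_fromBlocks (hc : c ≠ 0) (hyw : ∀ j i, y j ≠ w i)
    (hywc : ∀ j i, y j ≠ w i - c) :
    ∃ B : Matrix κ l ℂ, izerginMatrix c (Sum.elim x fun i => w i - c) (Sum.elim y w) =
      Matrix.fromBlocks (izerginMatrix c x y) B 0 0 := by
  refine ⟨(izerginMatrix c (Sum.elim x fun i => w i - c) (Sum.elim y w)).toBlocks₁₂, ?_⟩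
  have hzero (i : l) :
      izerginWeight c (Sum.elim x fun i => w i - c) (Sum.elim y w) (.inr i) = 0 :=
    izerginWeight_eq_zero (i := .inr i) hc rfl
  ext (j | j) (k | k) <;>
    simp [izerginMatrix, hzero, izerginWeight_sumElim_inl, hyw, hywc, Matrix.toBlocks₁₂]

theorem KIz_sumElim_sub (z : ℂ) (hc : c ≠ 0) (hyw : ∀ j i, y j ≠ w i)
    (hywc : ∀ j i, y j ≠ w i - c) :
    KIz c z (Sum.elim x fun i => w i - c) (Sum.elim y w) =
      (-z) ^ Fintype.card l * KIz c z x y := by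
  obtain ⟨B, hB⟩ := exists_izerginMatrix_sumElim_eq_fromBlocks (x := x) hc hyw hywc
  rw [KIz_eq_det_sub_scalar, hB, det_fromBlocks_zero_zero_sub_scalar, ← KIz_eq_det_sub_scalar]

end Izergin

theorem stmt10_general {ι κ l : Type*} [Fintype ι] [Fintype κ] [Fintype l] [DecidableEq κ]
    [DecidableEq l] (c : ℂ) (hc : c ≠ 0) (z : ℂ) (x : ι → ℂ) (y : κ → ℂ) (w : l → ℂ)
    (hgen : Generic c (Sum.elim x (Sum.elim y w))) :
    KIz c z (Sum.elim x fun i => w i - c) (Sum.elim y w) =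
        (-z) ^ Fintype.card l * KIz c z x y ∧
      KIzBar c z (Sum.elim x fun i => w i + c) (Sum.elim y w) =
        (-z) ^ Fintype.card l * KIzBar c z x y := by
  have hdiff (j : κ) (i : l) := hgen (.inr (.inl j)) (.inr (.inr i)) (by simp)
  simp only [Sum.elim_inl, Sum.elim_inr] at hdiff
  have hyw (j : κ) (i : l) : y j ≠ w i := sub_ne_zero.1 (hdiff j i).1
  have hsub (j : κ) (i : l) : y j ≠ w i - c := fun h => (hdiff j i).2.2.1 (by rw [h]; ring)
  have hadd (j : κ) (i : l) : y j ≠ w i - -c := fun h => (hdiff j i).2.1 (by rw [h]; ring)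
  refine ⟨KIz_sumElim_sub z hc hyw hsub, ?_⟩
  simpa only [KIzBar, sub_neg_eq_add] using KIz_sumElim_sub z (neg_ne_zero.2 hc) hyw hadd

/-- Recursive property of the modified Izergin determinant under the augmentation
`(ū, w∓c)`, `(v̄, w)`. -/
theorem stmt10
    (c : ℂ) (hc : c ≠ 0) (z : ℂ) (n m : ℕ)
    (u : Fin n → ℂ) (v : Fin m → ℂ) (w : ℂ)
    (hgen1 : Generic c (Fin.append (Fin.snoc u (w - c)) v))
    (hgen2 : Generic c (Fin.append (Fin.snoc u (w + c)) v))
    (hgen3 : Generic c (Fin.append u (Fin.snoc v w))) :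
    KIz c z (Fin.snoc u (w - c)) (Fin.snoc v w) = -z * KIz c z u v ∧
      KIzBar c z (Fin.snoc u (w + c)) (Fin.snoc v w) = -z * KIzBar c z u v := by
  have hgen : Generic c (Sum.elim u (Sum.elim v fun _ : Fin 1 => w)) :=
    Generic.sumElim_of_append_append (by rwa [Fin.append_right_eq_snoc])
  simpa [KIzBar, ← KIz_append, Fin.append_right_eq_snoc] using stmt10_general c hc z u v _ hgen
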